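/- Let S₁, ..., Sₙ all be copies of the same group S, where S is a non-trivial free product of two non-trivial groups, and let ψ : S₁ × ... × Sₙ → S₁ × ... × Sₙ be an isomorphism. Then there is a permutation σ of {1,...,n} such that for each j the component map π_j ∘ ψ|_{S_{σ(j)}} : S_{σ(j)} → S_j is an isomorphism, and π_j ∘ ψ|_{S_i} is trivial for all i ≠ σ(j). -/

import Mathlib

open Monoid

section CoprodIPart

variable {M : Bool → Type*} [∀ i, Group (M i)] [∀ i, DecidableEq (M i)]

theorem aux_smul_of_ne {i : Bool} (m : M i) (hm : m ≠ 1) (w : CoprodI.Word M)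
    (h : w.fstIdx ≠ some i) : (CoprodI.of m • w).fstIdx = some i := by
  rw [← CoprodI.Word.cons_eq_smul (h1 := h) (h2 := hm)]
  simp

theorem aux_fstIdx_none {w : CoprodI.Word M} (h : w.fstIdx = none) : w = CoprodI.Word.empty := by
  induction w using CoprodI.Word.consRecOn with
  | empty => rfl
  | cons i m w h1 h2 ih => simp at h

theorem aux_right (c : M true) (hc : c ≠ 1) (w : CoprodI.Word M) :
    (w.prod • (CoprodI.of c • (CoprodI.Word.empty : CoprodI.Word M))).fstIdx = some false ↔
      w.fstIdx = some false := by
  have he : (CoprodI.Word.empty : CoprodI.Word M).fstIdx = none := rfl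
  induction w using CoprodI.Word.consRecOn with
  | empty =>
    rw [CoprodI.Word.prod_empty, one_smul, aux_smul_of_ne c hc _ (by simp [he]), he]
    simp
  | cons i m w h1 h2 ih =>
    rw [CoprodI.Word.prod_cons, mul_smul, CoprodI.Word.fstIdx_cons]
    cases i with
    | false =>
      rw [aux_smul_of_ne m h2 _ (fun h => h1 (ih.1 h))]
    | true =>
      rcases hw : w.fstIdx with _ | b
      · rw [aux_fstIdx_none hw, CoprodI.Word.prod_empty, one_smul, ← mul_smul, ← map_mul]
        by_cases hmc : m * c = 1
        · rw [hmc, map_one, one_smul, he]; simp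
        · rw [aux_smul_of_ne _ hmc _ (by simp [he])]
      · cases b with
        | true => exact absurd hw h1
        | false =>
          rw [aux_smul_of_ne m h2 _ (by rw [ih.2 hw]; simp)]

theorem aux_centralizer (c : M true) (hc : c ≠ 1) (g : CoprodI M)
    (h : CoprodI.of c * g = g * CoprodI.of c) : ∃ x : M true, g = CoprodI.of x := by
  obtain ⟨w, rfl⟩ := CoprodI.Word.equiv.symm.surjective g
  change CoprodI.of c * w.prod = w.prod * CoprodI.of c at h
  change ∃ x : M true, w.prod = CoprodI.of x
  obtain ⟨p, rfl⟩ := (CoprodI.Word.equivPair true).symm.surjective w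
  rw [CoprodI.Word.equivPair_symm, CoprodI.Word.prod_rcons] at *
  set x := p.head
  have hp := p.fstIdx_ne
  set w := p.tail
  rcases hw : w.fstIdx with _ | b
  · exact ⟨x, by rw [aux_fstIdx_none hw]; simp⟩
  cases b with
  | true => exact absurd hw hp
  | false =>
    exfalso
    have h' : CoprodI.of (x⁻¹ * c * x) * w.prod = w.prod * CoprodI.of c := by
      rw [map_mul, map_mul, map_inv, mul_assoc, mul_assoc, h]; group
    have h3 := (aux_right c hc w).2 hw
    rw [← mul_smul, ← h', mul_smul] at h3
    have hpe : w.prod • (CoprodI.Word.empty : CoprodI.Word M) = w :=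
      CoprodI.Word.equiv.apply_symm_apply w
    rw [hpe, aux_smul_of_ne _ _ _ hp] at h3
    · simp at h3
    · intro hh
      apply hc
      have : c = x * (x⁻¹ * c * x) * x⁻¹ := by group
      rw [this, hh]; group

end CoprodIPart

section CoprodPart

universe u v

abbrev AuxFam (C : Type u) (D : Type v) : Bool → Type (max u v)
  | true => ULift.{v} C
  | false => ULift.{u} D

instance auxFamGroup (C : Type u) (D : Type v) [Group C] [Group D] : ∀ b, Group (AuxFam C D b)
  | true => inferInstanceAs (Group (ULift.{v} C))
  | false => inferInstanceAs (Group (ULift.{u} D))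

variable {C : Type u} {D : Type v} [Group C] [Group D]

def auxBack : ∀ b, AuxFam C D b →* Coprod C D
  | true => (Coprod.inl : C →* Coprod C D).comp (MulEquiv.ulift : ULift.{v} C ≃* C).toMonoidHom
  | false => (Coprod.inr : D →* Coprod C D).comp (MulEquiv.ulift : ULift.{u} D ≃* D).toMonoidHom

def auxTo : Coprod C D →* CoprodI (AuxFam C D) :=
  Coprod.lift
    ((CoprodI.of (M := AuxFam C D) (i := true)).comp
      (MulEquiv.ulift : ULift.{v} C ≃* C).symm.toMonoidHom)
    ((CoprodI.of (M := AuxFam C D) (i := false)).comp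
      (MulEquiv.ulift : ULift.{u} D ≃* D).symm.toMonoidHom)

theorem auxBack_auxTo (g : Coprod C D) : CoprodI.lift auxBack (auxTo g) = g := by
  have : (CoprodI.lift auxBack).comp auxTo = MonoidHom.id (Coprod C D) := by
    apply Coprod.hom_ext
    · ext x
      simp only [MonoidHom.comp_apply, auxTo, Coprod.lift_apply_inl, CoprodI.lift_of]
      rfl
    · ext x
      simp only [MonoidHom.comp_apply, auxTo, Coprod.lift_apply_inr, CoprodI.lift_of]
      rfl
  exact DFunLike.congr_fun this g

theorem centralizer_inl (c : C) (hc : c ≠ 1) (g : Coprod C D)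
    (h : Coprod.inl c * g = g * Coprod.inl c) : ∃ x : C, g = Coprod.inl x := by
  classical
  have h1 := congrArg auxTo h
  have h2 : auxTo (Coprod.inl c : Coprod C D) =
    CoprodI.of (M := AuxFam C D) (i := true) (ULift.up c) := rfl
  rw [map_mul, map_mul, h2] at h1
  obtain ⟨x, hx⟩ := aux_centralizer (M := AuxFam C D) (ULift.up c)
    (fun hh => hc (congrArg ULift.down hh)) _ h1
  refine ⟨x.down, ?_⟩
  rw [← auxBack_auxTo g, hx, CoprodI.lift_of]
  rfl

theorem centralizer_inr (d : D) (hd : d ≠ 1) (g : Coprod C D)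
    (h : Coprod.inr d * g = g * Coprod.inr d) : ∃ x : D, g = Coprod.inr x := by
  have h1 := congrArg (Coprod.swap C D) h
  rw [map_mul, map_mul, Coprod.swap_inr] at h1
  obtain ⟨x, hx⟩ := centralizer_inl d hd _ h1
  exact ⟨x, by rw [← Coprod.swap_swap g, hx, Coprod.swap_inl]⟩

/-- If a nontrivial element of `C` lies in `A`, the complement `B` is trivial. -/
theorem aux_trivial [Nontrivial D] (A B : Subgroup (Coprod C D))
    (hcomm : ∀ a ∈ A, ∀ b ∈ B, a * b = b * a)
    (hgen : ∀ s, ∃ a ∈ A, ∃ b ∈ B, s = a * b)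
    (c : C) (hc : c ≠ 1) (hcA : Coprod.inl c ∈ A) : B = ⊥ := by
  rw [Subgroup.eq_bot_iff_forall]
  intro b hb
  obtain ⟨x, rfl⟩ := centralizer_inl c hc b (hcomm _ hcA _ hb)
  by_contra hx
  have hx1 : x ≠ 1 := fun h => hx (by rw [h, map_one])
  obtain ⟨d, hd⟩ := exists_ne (1 : D)
  have hmem : (Coprod.inr d : Coprod C D) * Coprod.inl x * (Coprod.inr d)⁻¹ ∈ B := by
    obtain ⟨a, ha, b', hb', hs⟩ := hgen (Coprod.inr d)
    have hk := hcomm a ha _ (B.mul_mem (B.mul_mem hb' hb) (B.inv_mem hb'))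
    have : (Coprod.inr d : Coprod C D) * Coprod.inl x * (Coprod.inr d)⁻¹
        = b' * Coprod.inl x * b'⁻¹ := by
      rw [hs]
      calc a * b' * Coprod.inl x * (a * b')⁻¹ = (a * (b' * Coprod.inl x * b'⁻¹)) * a⁻¹ := by group
        _ = _ := by rw [hk]; group
    rw [this]
    exact B.mul_mem (B.mul_mem hb' hb) (B.inv_mem hb')
  obtain ⟨y, hy⟩ := centralizer_inl c hc _ (hcomm _ hcA _ hmem)
  have hxy := congrArg Coprod.fst hy
  simp at hxy
  subst hxy
  obtain ⟨z, hz⟩ := centralizer_inl x hx1 (Coprod.inr d : Coprod C D)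
    (mul_inv_eq_iff_eq_mul.1 hy).symm
  have := congrArg Coprod.snd hz
  simp at this
  exact hd this

theorem aux_indecomposable [Nontrivial C] [Nontrivial D] (A B : Subgroup (Coprod C D))
    (hcomm : ∀ a ∈ A, ∀ b ∈ B, a * b = b * a)
    (hgen : ∀ s, ∃ a ∈ A, ∃ b ∈ B, s = a * b) : A = ⊥ ∨ B = ⊥ := by
  obtain ⟨c, hc⟩ := exists_ne (1 : C)
  obtain ⟨a, ha, b, hb, hs⟩ := hgen (Coprod.inl c)
  have hab := hcomm a ha b hb
  obtain ⟨x, rfl⟩ := centralizer_inl c hc a (by rw [hs, mul_assoc, ← hab])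
  by_cases hx : x = 1
  · subst hx
    rw [map_one, one_mul] at hs
    left
    refine aux_trivial B A (fun b hb a ha => (hcomm a ha b hb).symm) ?_ c hc (hs ▸ hb)
    intro s
    obtain ⟨a, ha, b, hb, rfl⟩ := hgen s
    exact ⟨b, hb, a, ha, hcomm a ha b hb⟩
  · exact Or.inr (aux_trivial A B hcomm hgen x hx ha)

end CoprodPart

theorem stmt_18 (C D : Type*) [Group C] [Group D] [Nontrivial C] [Nontrivial D]
    (n : ℕ) (ψ : (Fin n → Coprod C D) ≃* (Fin n → Coprod C D)) :
    ∃ σ : Equiv.Perm (Fin n), ∀ j : Fin n,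
      (Function.Bijective fun s : Coprod C D => ψ (Pi.mulSingle (σ j) s) j) ∧
      ∀ i : Fin n, i ≠ σ j → ∀ s : Coprod C D, ψ (Pi.mulSingle i s) j = 1 := by
  classical
  obtain ⟨c, hc⟩ := exists_ne (1 : C)
  have hS : (Coprod.inl c : Coprod C D) ≠ 1 := fun h =>
    hc (by simpa using congrArg Coprod.fst h)
  -- splitting off the i-th coordinate
  have hsplit : ∀ (i : Fin n) (x : Fin n → Coprod C D),
      x = Pi.mulSingle i (x i) * Function.update x i 1 := by
    intro i x
    ext k
    by_cases hk : k = i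
    · subst hk; simp
    · simp [hk]
  have hdich : ∀ j i : Fin n, (∀ s, ψ (Pi.mulSingle i s) j = 1) ∨
      (∀ x : Fin n → Coprod C D, x i = 1 → ψ x j = 1) := by
    intro j i
    let e : (Fin n → Coprod C D) →* Coprod C D :=
      (Pi.evalMonoidHom (fun _ : Fin n => Coprod C D) j).comp ψ.toMonoidHom
    have := aux_indecomposable
      (e.comp (MonoidHom.mulSingle (fun _ : Fin n => Coprod C D) i)).range
      ((Pi.evalMonoidHom (fun _ : Fin n => Coprod C D) i).ker.map e) ?_ ?_
    · rcases this with h | h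
      · left
        intro s
        exact (Subgroup.eq_bot_iff_forall _).1 h _ ⟨s, rfl⟩
      · right
        intro x hx
        exact (Subgroup.eq_bot_iff_forall _).1 h _ ⟨x, hx, rfl⟩
    · rintro _ ⟨s, rfl⟩ _ ⟨x, hx, rfl⟩
      have hx' : x i = 1 := hx
      change e (Pi.mulSingle i s) * e x = e x * e (Pi.mulSingle i s)
      rw [← map_mul, ← map_mul]
      congr 1
      ext k
      by_cases hk : k = i
      · subst hk; simp [hx']
      · simp [hk]
    · intro s
      obtain ⟨x, hx⟩ := ψ.surjective (Pi.mulSingle j s)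
      refine ⟨e (Pi.mulSingle i (x i)), ⟨x i, rfl⟩, e (Function.update x i 1),
        ⟨_, by simp [MonoidHom.mem_ker], rfl⟩, ?_⟩
      rw [← map_mul, ← hsplit]
      change s = ψ x j
      rw [hx]; simp
  have hex : ∀ j, ∃ i, ∀ x : Fin n → Coprod C D, x i = 1 → ψ x j = 1 := by
    intro j
    by_contra! hcon
    have h1 : ∀ i s, ψ (Pi.mulSingle i s) j = 1 := by
      intro i
      rcases hdich j i with h | h
      · exact h
      · obtain ⟨x, hx, hx'⟩ := hcon i
        exact absurd (h x hx) hx'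
    have h2 : (Pi.evalMonoidHom (fun _ : Fin n => Coprod C D) j).comp ψ.toMonoidHom = 1 := by
      apply MonoidHom.pi_ext
      intro i s
      exact h1 i s
    obtain ⟨x, hx⟩ := ψ.surjective (Pi.mulSingle j (Coprod.inl c))
    have h3 : ψ x j = 1 := DFunLike.congr_fun h2 x
    rw [hx] at h3
    exact hS (by simpa using h3)
  choose σ hσ using hex
  have htriv : ∀ j i, i ≠ σ j → ∀ s : Coprod C D, ψ (Pi.mulSingle i s) j = 1 := by
    intro j i hi s
    exact hσ j _ (by simp [hi.symm])
  have hsurj : Function.Surjective σ := by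
    intro i
    by_contra! hcon
    have h1 : ψ (Pi.mulSingle i (Coprod.inl c)) = 1 := by
      ext j
      exact htriv j i (hcon j).symm _
    rw [map_eq_one_iff ψ ψ.injective] at h1
    exact hS (by simpa using congrFun h1 i)
  have hbij : Function.Bijective σ := Finite.surjective_iff_bijective.1 hsurj
  refine ⟨Equiv.ofBijective σ hbij, fun j => ⟨⟨?_, ?_⟩, htriv j⟩⟩
  · intro s t hst
    simp only [Equiv.ofBijective_apply] at hst
    have : ψ (Pi.mulSingle (σ j) s) = ψ (Pi.mulSingle (σ j) t) := by
      ext k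
      by_cases hk : k = j
      · subst hk; exact hst
      · have : σ j ≠ σ k := fun h => hk (hbij.1 h).symm
        rw [htriv k _ this, htriv k _ this]
    simpa using congrFun (ψ.injective this) (σ j)
  · intro s
    obtain ⟨x, hx⟩ := ψ.surjective (Pi.mulSingle j s)
    refine ⟨x (σ j), ?_⟩
    have h1 : ψ x j = s := by rw [hx]; simp
    rw [hsplit (σ j) x, map_mul, Pi.mul_apply, hσ j (Function.update x (σ j) 1) (by simp),
      mul_one] at h1
    exact h1
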